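/- For 0 ≤ j ≤ k, let CG^{[k,k,j],⋆} : V_k(C) ⊗ V_k(C) → V_{2k−2j}(C) be the transpose of the Clebsch–Gordan inclusion, and let ∇ = ∂²/(∂X∂Ȳ) − ∂²/(∂Y∂X̄) act on polynomials in X,Y,X̄,Ȳ. Then for every δ ∈ V_k ⊗ V_k (viewed as a polynomial bihomogeneous of degree k in (X,Y) and in (X̄,Ȳ)), CG^{[k,k,j],⋆}(δ) = (−1)^j j! · (1/(j!)²) ∇^j(δ) |_{X̄=X, Ȳ=Y}. In particular, the two natural SL₂-equivariant projections V_k ⊗ V_k → V_{2k−2j} differ by the scalar (−1)^j j!. -/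

import Mathlib

open MvPolynomial

/-- The operator `∇ = ∂²/(∂X∂Ȳ) − ∂²/(∂Y∂X̄)` on polynomials in `X,Y,X̄,Ȳ`
(variables `0,1,2,3`). -/
noncomputable def asaiNabla : Module.End ℂ (MvPolynomial (Fin 4) ℂ) :=
  ((pderiv (0 : Fin 4) : Derivation ℂ (MvPolynomial (Fin 4) ℂ) (MvPolynomial (Fin 4) ℂ)).toLinearMap ∘ₗ
    (pderiv (3 : Fin 4)).toLinearMap) -
  ((pderiv (1 : Fin 4)).toLinearMap ∘ₗ (pderiv (2 : Fin 4)).toLinearMap)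

/-- Substitution `X̄ := X`, `Ȳ := Y`. -/
noncomputable def asaiSubXY : MvPolynomial (Fin 4) ℂ →ₐ[ℂ] MvPolynomial (Fin 2) ℂ :=
  aeval ![X 0, X 1, X 0, X 1]

/-- The right `GL₂`-action `(f∣M)(X,Y) = f(aX+bY, cX+dY)` on two-variable polynomials. -/
noncomputable def asaiAct2 (M : Matrix (Fin 2) (Fin 2) ℂ) :
    MvPolynomial (Fin 2) ℂ →ₐ[ℂ] MvPolynomial (Fin 2) ℂ :=
  aeval ![C (M 0 0) * X 0 + C (M 0 1) * X 1, C (M 1 0) * X 0 + C (M 1 1) * X 1]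

/-- The diagonal right action on polynomials in `X,Y,X̄,Ȳ`. -/
noncomputable def asaiAct4 (M : Matrix (Fin 2) (Fin 2) ℂ) :
    MvPolynomial (Fin 4) ℂ →ₐ[ℂ] MvPolynomial (Fin 4) ℂ :=
  aeval ![C (M 0 0) * X 0 + C (M 0 1) * X 1, C (M 1 0) * X 0 + C (M 1 1) * X 1,
          C (M 0 0) * X 2 + C (M 0 1) * X 3, C (M 1 0) * X 2 + C (M 1 1) * X 3]

/-!
An equivariant map `D : V_m ⊗ V_n → V_N` with `N + 2 * j = m + n` is determined by one number. The
functional `ℓ f = coeff of Y^N in D f` is the value of `D f` at `(0, 1)`, so by equivariance `D f`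
takes the value `ℓ (f ∣ M)` at the second column of `M`, and `ℓ` determines `D`. Invariance under
the torus makes `ℓ` vanish on the monomials `X^a Y^b X̄^c Ȳ^d` with `a + c ≠ j`, and invariance
under the unipotent matrices fixing `(0, 1)` links the remaining ones by a recurrence, which reduces
everything to `ℓ (Y^m X̄^j Ȳ^(n-j))`. Since `∇` is multiplied by `det M` under a change of
variables, the transvectant is equivariant too, and the scalar is found by evaluating both maps on
that one monomial.
-/

open Finset.HasAntidiagonal (antidiagonal mem_antidiagonal)

section General

variable {σ τ R : Type*} [CommSemiring R]

theorem eval_piSingle_of_isHomogeneous [DecidableEq σ] {p : MvPolynomial σ R} {n : ℕ}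
    (hp : p.IsHomogeneous n) (i : σ) (s : R) :
    eval (Pi.single i s) p = coeff (Finsupp.single i n) p * s ^ n := by
  rw [eval_eq, Finset.sum_eq_single (Finsupp.single i n)]
  · congr 1
    have hprod := Finsupp.prod_single_index (a := i) (b := n)
      (h := fun l e => (Pi.single i s : σ → R) l ^ e) (pow_zero _)
    simpa only [Finsupp.prod, Pi.single_eq_same] using hprod
  · intro d hd hne
    obtain ⟨l, hli, hl⟩ : ∃ l, l ≠ i ∧ d l ≠ 0 := by
      by_contra! h
      have hd_single : d = Finsupp.single i (d i) := by
        ext l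
        by_cases hl : l = i
        · simp [hl]
        · simp [hl, h l hl]
      have hdeg : d.degree = n := by
        rw [Finsupp.degree_eq_weight_one]; exact hp (mem_support_iff.1 hd)
      rw [hd_single, Finsupp.degree_single] at hdeg
      exact hne (hdeg ▸ hd_single)
    rw [Finset.prod_eq_zero (Finsupp.mem_support_iff.2 hl) (by simp [hli, hl]), mul_zero]
  · intro h
    rw [notMem_support_iff.1 h, zero_mul]

theorem pderiv_aeval [Fintype σ] (g : σ → MvPolynomial τ R) (i : τ) (p : MvPolynomial σ R) :
    pderiv i (aeval g p) = ∑ l, pderiv i (g l) * aeval g (pderiv l p) := by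
  classical
  induction p using MvPolynomial.induction_on with
  | C a => simp
  | add p q hp hq => simp only [map_add, hp, hq, mul_add, Finset.sum_add_distrib]
  | mul_X p l hp =>
    simp only [map_mul, aeval_X, Derivation.leibniz, smul_eq_mul, hp, pderiv_X, map_add, mul_add,
      Finset.sum_add_distrib, Finset.mul_sum]
    congr 1
    · simp [Pi.single_apply, apply_ite, mul_comm]
    · exact Finset.sum_congr rfl fun _ _ => by ring

end General

theorem eq_zero_of_eval_col_eq_zero {K : Type*} [Field K] [Infinite K] {p : MvPolynomial (Fin 2) K}
    (hp : ∀ M : Matrix (Fin 2) (Fin 2) K, M.det = 1 → eval (M.col 1) p = 0) : p = 0 := by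
  have hX : X 0 * p = 0 := by
    refine MvPolynomial.funext fun x => ?_
    by_cases hx : x 0 = 0
    · simp [hx]
    · have hM := hp !![0, x 0; -(x 0)⁻¹, x 1] (by simp [Matrix.det_fin_two, hx])
      have hcol : (!![0, x 0; -(x 0)⁻¹, x 1] : Matrix (Fin 2) (Fin 2) K).col 1 = x := by
        ext i; fin_cases i <;> rfl
      rw [hcol] at hM
      simp [hM]
  exact (mul_eq_zero.1 hX).resolve_left (X_ne_zero 0)

/-- The bidegrees of the variables `X, Y, X̄, Ȳ`. -/
def biweight : Fin 4 → ℕ × ℕ :=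
  ![(1, 0), (1, 0), (0, 1), (0, 1)]

/-- The space `V_m ⊗ V_n`, realised as the polynomials of bidegree `(m, n)` in `(X, Y)` and
`(X̄, Ȳ)`. -/
noncomputable def bihomogeneousSubmodule (m n : ℕ) : Submodule ℂ (MvPolynomial (Fin 4) ℂ) :=
  weightedHomogeneousSubmodule ℂ biweight (m, n)

/-- The monomial `X^a Y^b X̄^c Ȳ^d`. -/
noncomputable def bimonomial (a b c d : ℕ) : MvPolynomial (Fin 4) ℂ :=
  X 0 ^ a * X 1 ^ b * X 2 ^ c * X 3 ^ d

/-- The space `Hom_{SL₂}(V_m ⊗ V_n, V_N)`. Its elements are linear maps on all polynomials, of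
which only the values on `V_m ⊗ V_n` are meaningful. -/
def equivariantHom (m n N : ℕ) :
    Submodule ℂ (MvPolynomial (Fin 4) ℂ →ₗ[ℂ] MvPolynomial (Fin 2) ℂ) where
  carrier := {D | ∀ f ∈ bihomogeneousSubmodule m n, (D f).IsHomogeneous N ∧
    ∀ M : Matrix (Fin 2) (Fin 2) ℂ, M.det = 1 → D (asaiAct4 M f) = asaiAct2 M (D f)}
  add_mem' hD hE f hf := ⟨(hD f hf).1.add (hE f hf).1, fun M hM => by
    simp only [LinearMap.add_apply, map_add, (hD f hf).2 M hM, (hE f hf).2 M hM]⟩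
  zero_mem' f _ := ⟨isHomogeneous_zero _ _ _, fun M _ => by simp⟩
  smul_mem' c D hD f hf := ⟨(homogeneousSubmodule _ _ _).smul_mem c (hD f hf).1, fun M hM => by
    simp only [LinearMap.smul_apply, map_smul, (hD f hf).2 M hM]⟩

section Bihomogeneous

variable {m n : ℕ} {f : MvPolynomial (Fin 4) ℂ}

theorem bimonomial_mem_bihomogeneousSubmodule (a b c d : ℕ) :
    bimonomial a b c d ∈ bihomogeneousSubmodule (a + b) (c + d) := by
  have hX (i : Fin 4) (e : ℕ) := (isWeightedHomogeneous_X ℂ biweight i).pow e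
  have hprod := (((hX 0 a).mul (hX 1 b)).mul (hX 2 c)).mul (hX 3 d)
  simpa [bimonomial, bihomogeneousSubmodule, biweight] using hprod

theorem mem_bihomogeneousSubmodule :
    f ∈ bihomogeneousSubmodule m n ↔ ∀ d ∈ f.support, d 0 + d 1 = m ∧ d 2 + d 3 = n := by
  simp [bihomogeneousSubmodule, biweight, IsWeightedHomogeneous, Finsupp.weight_apply,
    Finsupp.sum_fintype, Fin.sum_univ_four, Prod.ext_iff]

theorem bihomogeneousSubmodule_eq_span (m n : ℕ) :
    bihomogeneousSubmodule m n =
      Submodule.span ℂ {f | ∃ a b c d, a + b = m ∧ c + d = n ∧ bimonomial a b c d = f} := by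
  refine le_antisymm (fun f hf => ?_) (Submodule.span_le.2 ?_)
  · rw [f.as_sum]
    refine Submodule.sum_mem _ fun d hd => ?_
    obtain ⟨hm, hn⟩ := mem_bihomogeneousSubmodule.1 hf d hd
    have hmonomial : monomial d (coeff d f) =
        coeff d f • bimonomial (d 0) (d 1) (d 2) (d 3) := by
      rw [monomial_eq, Finsupp.prod_fintype _ _ (by simp), Fin.prod_univ_four, smul_eq_C_mul,
        bimonomial]
    rw [hmonomial]
    exact Submodule.smul_mem _ _ (Submodule.subset_span ⟨_, _, _, _, hm, hn, rfl⟩)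
  · rintro _ ⟨a, b, c, d, rfl, rfl, rfl⟩
    exact bimonomial_mem_bihomogeneousSubmodule a b c d

theorem isHomogeneous_of_mem_bihomogeneousSubmodule (hf : f ∈ bihomogeneousSubmodule m n) :
    f.IsHomogeneous (m + n) := by
  intro d hd
  obtain ⟨hm, hn⟩ := mem_bihomogeneousSubmodule.1 hf d (mem_support_iff.2 hd)
  rw [← hm, ← hn]
  simp [Finsupp.weight_apply, Finsupp.sum_fintype, Fin.sum_univ_four, add_assoc]

theorem asaiAct4_X (M : Matrix (Fin 2) (Fin 2) ℂ) (i : Fin 4) :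
    asaiAct4 M (X i) =
      ![C (M 0 0) * X 0 + C (M 0 1) * X 1, C (M 1 0) * X 0 + C (M 1 1) * X 1,
        C (M 0 0) * X 2 + C (M 0 1) * X 3, C (M 1 0) * X 2 + C (M 1 1) * X 3] i :=
  aeval_X _ _

theorem asaiAct4_bimonomial (M : Matrix (Fin 2) (Fin 2) ℂ) (a b c d : ℕ) :
    asaiAct4 M (bimonomial a b c d) =
      (C (M 0 0) * X 0 + C (M 0 1) * X 1) ^ a * (C (M 1 0) * X 0 + C (M 1 1) * X 1) ^ b *
      (C (M 0 0) * X 2 + C (M 0 1) * X 3) ^ c * (C (M 1 0) * X 2 + C (M 1 1) * X 3) ^ d := by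
  simp [asaiAct4_X, bimonomial]

theorem asaiAct4_mem_bihomogeneousSubmodule (M : Matrix (Fin 2) (Fin 2) ℂ)
    (hf : f ∈ bihomogeneousSubmodule m n) : asaiAct4 M f ∈ bihomogeneousSubmodule m n := by
  suffices h : bihomogeneousSubmodule m n ≤
      (bihomogeneousSubmodule m n).comap (asaiAct4 M).toLinearMap from h hf
  conv_lhs => rw [bihomogeneousSubmodule_eq_span]
  rw [Submodule.span_le]
  rintro _ ⟨a, b, c, d, rfl, rfl, rfl⟩
  have hXY (r s : ℂ) : IsWeightedHomogeneous biweight (C r * X 0 + C s * X 1) (1, 0) :=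
    ((isWeightedHomogeneous_X ℂ biweight 0).C_mul r).add
      ((isWeightedHomogeneous_X ℂ biweight 1).C_mul s)
  have hXY' (r s : ℂ) : IsWeightedHomogeneous biweight (C r * X 2 + C s * X 3) (0, 1) :=
    ((isWeightedHomogeneous_X ℂ biweight 2).C_mul r).add
      ((isWeightedHomogeneous_X ℂ biweight 3).C_mul s)
  have hprod := ((((hXY (M 0 0) (M 0 1)).pow a).mul ((hXY (M 1 0) (M 1 1)).pow b)).mul
    ((hXY' (M 0 0) (M 0 1)).pow c)).mul ((hXY' (M 1 0) (M 1 1)).pow d)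
  rw [← asaiAct4_bimonomial] at hprod
  simpa [bihomogeneousSubmodule] using hprod

theorem mem_equivariantHom {N : ℕ}
    {D : MvPolynomial (Fin 4) ℂ →ₗ[ℂ] MvPolynomial (Fin 2) ℂ} :
    D ∈ equivariantHom m n N ↔
      (∀ f : MvPolynomial (Fin 4) ℂ, (∀ d ∈ f.support, d 0 + d 1 = m ∧ d 2 + d 3 = n) →
        ∀ d ∈ (D f).support, d 0 + d 1 = N) ∧
      ∀ M : Matrix (Fin 2) (Fin 2) ℂ, M.det = 1 → ∀ f : MvPolynomial (Fin 4) ℂ,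
        (∀ d ∈ f.support, d 0 + d 1 = m ∧ d 2 + d 3 = n) →
        D (asaiAct4 M f) = asaiAct2 M (D f) := by
  have hdegree (p : MvPolynomial (Fin 2) ℂ) :
      p.IsHomogeneous N ↔ ∀ d ∈ p.support, d 0 + d 1 = N := by
    simp [IsHomogeneous, IsWeightedHomogeneous, Finsupp.weight_apply, Finsupp.sum_fintype]
  simp only [← mem_bihomogeneousSubmodule, ← hdegree]
  exact ⟨fun hD => ⟨fun f hf => (hD f hf).1, fun M hM f hf => (hD f hf).2 M hM⟩,
    fun hD f hf => ⟨hD.1 f hf, fun M hM => hD.2 M hM f hf⟩⟩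

theorem asaiAct4_diagonal_bimonomial (s t : ℂ) (a b c d : ℕ) :
    asaiAct4 !![s, 0; 0, t] (bimonomial a b c d) =
      (s ^ (a + c) * t ^ (b + d)) • bimonomial a b c d := by
  rw [asaiAct4_bimonomial]
  simp only [Matrix.of_apply, Matrix.cons_val', Matrix.cons_val_zero, Matrix.cons_val_one,
    Matrix.cons_val_fin_one, bimonomial, C_0, zero_mul, add_zero, zero_add, mul_pow, pow_add,
    smul_eq_C_mul, C_mul, C_pow]
  ring

theorem asaiAct4_unipotent_bimonomial (a b c d : ℕ) :
    asaiAct4 !![1, 0; 1, 1] (bimonomial a b c d) =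
      ∑ p ∈ antidiagonal b ×ˢ antidiagonal d,
        ((b.choose p.1.1 : ℂ) * d.choose p.2.1) •
          bimonomial (a + p.1.1) p.1.2 (c + p.2.1) p.2.2 := by
  have hact : asaiAct4 !![1, 0; 1, 1] (bimonomial a b c d) =
      X 0 ^ a * X 2 ^ c * ((X 0 + X 1) ^ b * (X 2 + X 3) ^ d) := by
    simp only [asaiAct4_bimonomial, Matrix.of_apply, Matrix.cons_val', Matrix.cons_val_zero,
      Matrix.cons_val_one, Matrix.cons_val_fin_one, C_0, C_1, zero_mul, one_mul, add_zero]
    ring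
  rw [hact, (Commute.all _ _).add_pow', (Commute.all _ _).add_pow', Finset.sum_mul_sum,
    ← Finset.sum_product', Finset.mul_sum]
  refine Finset.sum_congr rfl fun p _ => ?_
  simp only [bimonomial, smul_eq_C_mul, nsmul_eq_mul, pow_add, map_mul, map_natCast]
  ring

end Bihomogeneous

section Uniqueness

variable {m n N j : ℕ} {D : MvPolynomial (Fin 4) ℂ →ₗ[ℂ] MvPolynomial (Fin 2) ℂ}

theorem eval_asaiAct2 (M : Matrix (Fin 2) (Fin 2) ℂ) (x : Fin 2 → ℂ)
    (p : MvPolynomial (Fin 2) ℂ) : eval x (asaiAct2 M p) = eval (M.mulVec x) p := by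
  have h : (aeval x).comp (asaiAct2 M) = aeval (R := ℂ) (M.mulVec x) := by
    refine MvPolynomial.algHom_ext fun i => ?_
    fin_cases i <;> simp [asaiAct2]
  exact DFunLike.congr_fun h p

theorem coeff_apply_asaiAct4 (hD : D ∈ equivariantHom m n N) {f : MvPolynomial (Fin 4) ℂ}
    (hf : f ∈ bihomogeneousSubmodule m n) {M : Matrix (Fin 2) (Fin 2) ℂ} (hM : M.det = 1) :
    coeff (Finsupp.single 1 N) (D (asaiAct4 M f)) = eval (M.col 1) (D f) := by
  have hact := (hD _ (asaiAct4_mem_bihomogeneousSubmodule M hf)).1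
  have hcoeff := eval_piSingle_of_isHomogeneous hact 1 1
  rw [one_pow, mul_one, (hD f hf).2 M hM, eval_asaiAct2, Matrix.mulVec_single_one] at hcoeff
  rw [(hD f hf).2 M hM, hcoeff]

theorem coeff_apply_bimonomial_of_ne (hD : D ∈ equivariantHom m n N) (hN : N + 2 * j = m + n)
    {a b c d : ℕ} (hab : a + b = m) (hcd : c + d = n) (hac : a + c ≠ j) :
    coeff (Finsupp.single 1 N) (D (bimonomial a b c d)) = 0 := by
  by_contra hne
  have hf : bimonomial a b c d ∈ bihomogeneousSubmodule m n :=
    hab ▸ hcd ▸ bimonomial_mem_bihomogeneousSubmodule a b c d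
  have hcol : (!![2, 0; 0, 2⁻¹] : Matrix (Fin 2) (Fin 2) ℂ).col 1 = Pi.single 1 2⁻¹ := by
    ext i; fin_cases i <;> rfl
  have h := coeff_apply_asaiAct4 hD hf (M := !![2, 0; 0, 2⁻¹]) (by simp [Matrix.det_fin_two])
  rw [asaiAct4_diagonal_bimonomial, map_smul, coeff_smul, smul_eq_mul, hcol,
    eval_piSingle_of_isHomogeneous (hD _ hf).1, mul_comm] at h
  have hpow : (2 : ℂ) ^ (a + c) * 2 ^ N = 2 ^ (b + d) := by
    have hscale := mul_left_cancel₀ hne h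
    rw [inv_pow, inv_pow] at hscale
    field_simp at hscale
    exact hscale
  have hexp : a + c + N = b + d :=
    Nat.pow_right_injective le_rfl (by rw [← pow_add] at hpow; exact_mod_cast hpow)
  omega

theorem coeff_apply_bimonomial_recurrence (hD : D ∈ equivariantHom m n N)
    (hN : N + 2 * j = m + n) {a b c d : ℕ} (hab : a + (b + 1) = m) (hcd : c + (d + 1) = n)
    (hac : a + c + 1 = j) :
    (b + 1) * coeff (Finsupp.single 1 N) (D (bimonomial (a + 1) b c (d + 1))) +
      (d + 1) * coeff (Finsupp.single 1 N) (D (bimonomial a (b + 1) (c + 1) d)) = 0 := by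
  have hf : bimonomial a (b + 1) c (d + 1) ∈ bihomogeneousSubmodule m n :=
    hab ▸ hcd ▸ bimonomial_mem_bihomogeneousSubmodule a (b + 1) c (d + 1)
  have hcol : (!![1, 0; 1, 1] : Matrix (Fin 2) (Fin 2) ℂ).col 1 = Pi.single 1 1 := by
    ext i; fin_cases i <;> rfl
  have hinv := coeff_apply_asaiAct4 hD hf (M := !![1, 0; 1, 1]) (by simp [Matrix.det_fin_two])
  rw [hcol, eval_piSingle_of_isHomogeneous (hD _ hf).1, one_pow, mul_one,
    coeff_apply_bimonomial_of_ne hD hN hab hcd (by omega), asaiAct4_unipotent_bimonomial,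
    map_sum, coeff_sum, Finset.sum_eq_add_of_mem ((1, b), (0, d + 1)) ((0, b + 1), (1, d))
      (by simp [add_comm]) (by simp [add_comm]) (by simp)] at hinv
  · simpa using hinv
  · rintro ⟨⟨i, b'⟩, ⟨l, d'⟩⟩ hp hne
    simp only [Finset.mem_product, mem_antidiagonal] at hp
    have hm : a + i + b' = m := by omega
    have hn : c + l + d' = n := by omega
    have hweight : a + i + (c + l) ≠ j := by grind
    rw [map_smul, coeff_smul, coeff_apply_bimonomial_of_ne hD hN hm hn hweight, smul_zero]

theorem coeff_apply_bimonomial_eq_zero (hD : D ∈ equivariantHom m n N)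
    (hN : N + 2 * j = m + n) (hjn : j ≤ n)
    (h0 : coeff (Finsupp.single 1 N) (D (bimonomial 0 m j (n - j))) = 0) (a : ℕ) :
    ∀ {b c d : ℕ}, a + b = m → c + d = n →
      coeff (Finsupp.single 1 N) (D (bimonomial a b c d)) = 0 := by
  induction a with
  | zero =>
    intro b c d hab hcd
    by_cases hc : c = j
    · obtain rfl : b = m := by omega
      obtain rfl : d = n - j := by omega
      rwa [hc]
    · exact coeff_apply_bimonomial_of_ne hD hN hab hcd (by omega)
  | succ a ih =>
    intro b c d hab hcd
    by_cases hac : a + 1 + c = j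
    · obtain ⟨d, rfl⟩ : ∃ d', d = d' + 1 := ⟨d - 1, by omega⟩
      have hrec := coeff_apply_bimonomial_recurrence hD hN (a := a) (b := b) (c := c) (d := d)
        (by omega) hcd (by omega)
      rw [ih (by omega) (by omega), mul_zero, add_zero] at hrec
      exact (mul_eq_zero.1 hrec).resolve_left (Nat.cast_add_one_ne_zero b)
    · exact coeff_apply_bimonomial_of_ne hD hN hab hcd hac

theorem apply_eq_zero_of_mem_equivariantHom (hD : D ∈ equivariantHom m n N)
    (hN : N + 2 * j = m + n) (hjn : j ≤ n)
    (h0 : coeff (Finsupp.single 1 N) (D (bimonomial 0 m j (n - j))) = 0)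
    {f : MvPolynomial (Fin 4) ℂ} (hf : f ∈ bihomogeneousSubmodule m n) : D f = 0 := by
  have hcoeff : bihomogeneousSubmodule m n ≤
      LinearMap.ker (lcoeff ℂ (Finsupp.single 1 N) ∘ₗ D) := by
    rw [bihomogeneousSubmodule_eq_span, Submodule.span_le]
    rintro _ ⟨a, b, c, d, hab, hcd, rfl⟩
    exact coeff_apply_bimonomial_eq_zero hD hN hjn h0 a hab hcd
  refine eq_zero_of_eval_col_eq_zero fun M hM => ?_
  rw [← coeff_apply_asaiAct4 hD hf hM]
  exact hcoeff (asaiAct4_mem_bihomogeneousSubmodule M hf)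

end Uniqueness

section Transvectant

/-- The `j`-th transvectant `δ ↦ ∇^j(δ)|_{X̄ = X, Ȳ = Y}`. -/
noncomputable def transvectant (j : ℕ) :
    MvPolynomial (Fin 4) ℂ →ₗ[ℂ] MvPolynomial (Fin 2) ℂ :=
  asaiSubXY.toLinearMap ∘ₗ (asaiNabla ^ j)

theorem asaiNabla_apply (f : MvPolynomial (Fin 4) ℂ) :
    asaiNabla f = pderiv 0 (pderiv 3 f) - pderiv 1 (pderiv 2 f) := rfl

theorem pderiv_asaiAct4 (M : Matrix (Fin 2) (Fin 2) ℂ) (i : Fin 4)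
    (f : MvPolynomial (Fin 4) ℂ) :
    pderiv i (asaiAct4 M f) =
      ∑ l, pderiv i (asaiAct4 M (X l)) * asaiAct4 M (pderiv l f) := by
  simpa only [asaiAct4, aeval_X] using pderiv_aeval _ i f

theorem asaiNabla_asaiAct4 (M : Matrix (Fin 2) (Fin 2) ℂ) (f : MvPolynomial (Fin 4) ℂ) :
    asaiNabla (asaiAct4 M f) = M.det • asaiAct4 M (asaiNabla f) := by
  have hX (g : MvPolynomial (Fin 4) ℂ) : pderiv 0 (asaiAct4 M g) =
      C (M 0 0) * asaiAct4 M (pderiv 0 g) + C (M 1 0) * asaiAct4 M (pderiv 1 g) := by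
    simp [pderiv_asaiAct4, asaiAct4_X, Fin.sum_univ_four, pderiv_X]
  have hY (g : MvPolynomial (Fin 4) ℂ) : pderiv 1 (asaiAct4 M g) =
      C (M 0 1) * asaiAct4 M (pderiv 0 g) + C (M 1 1) * asaiAct4 M (pderiv 1 g) := by
    simp [pderiv_asaiAct4, asaiAct4_X, Fin.sum_univ_four, pderiv_X]
  have hX' : pderiv 2 (asaiAct4 M f) =
      C (M 0 0) * asaiAct4 M (pderiv 2 f) + C (M 1 0) * asaiAct4 M (pderiv 3 f) := by
    simp [pderiv_asaiAct4, asaiAct4_X, Fin.sum_univ_four, pderiv_X]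
  have hY' : pderiv 3 (asaiAct4 M f) =
      C (M 0 1) * asaiAct4 M (pderiv 2 f) + C (M 1 1) * asaiAct4 M (pderiv 3 f) := by
    simp [pderiv_asaiAct4, asaiAct4_X, Fin.sum_univ_four, pderiv_X]
  simp only [asaiNabla_apply, hX', hY', map_add, map_sub, pderiv_C_mul, hX, hY,
    Matrix.det_fin_two, smul_eq_C_mul, C_mul]
  ring

theorem asaiNabla_pow_asaiAct4 (M : Matrix (Fin 2) (Fin 2) ℂ) (j : ℕ)
    (f : MvPolynomial (Fin 4) ℂ) :
    (asaiNabla ^ j) (asaiAct4 M f) = M.det ^ j • asaiAct4 M ((asaiNabla ^ j) f) := by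
  induction j with
  | zero => simp
  | succ j ih =>
    rw [pow_succ', Module.End.mul_apply, ih, map_smul, asaiNabla_asaiAct4, smul_smul, ← pow_succ,
      ← Module.End.mul_apply]

theorem asaiSubXY_asaiAct4 (M : Matrix (Fin 2) (Fin 2) ℂ) (f : MvPolynomial (Fin 4) ℂ) :
    asaiSubXY (asaiAct4 M f) = asaiAct2 M (asaiSubXY f) := by
  have h : asaiSubXY.comp (asaiAct4 M) = (asaiAct2 M).comp asaiSubXY := by
    refine MvPolynomial.algHom_ext fun i => ?_
    fin_cases i <;> simp [asaiSubXY, asaiAct4, asaiAct2]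
  exact DFunLike.congr_fun h f

theorem transvectant_asaiAct4 (M : Matrix (Fin 2) (Fin 2) ℂ) (j : ℕ)
    (f : MvPolynomial (Fin 4) ℂ) :
    transvectant j (asaiAct4 M f) = M.det ^ j • asaiAct2 M (transvectant j f) := by
  simp only [transvectant, LinearMap.comp_apply, AlgHom.toLinearMap_apply,
    asaiNabla_pow_asaiAct4, map_smul, asaiSubXY_asaiAct4]

theorem isHomogeneous_asaiNabla_pow {f : MvPolynomial (Fin 4) ℂ} {n : ℕ}
    (hf : f.IsHomogeneous n) (j : ℕ) : ((asaiNabla ^ j) f).IsHomogeneous (n - 2 * j) := by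
  induction j with
  | zero => simpa using hf
  | succ j ih =>
    rw [pow_succ', Module.End.mul_apply, asaiNabla_apply]
    exact ih.pderiv.pderiv.sub ih.pderiv.pderiv

theorem isHomogeneous_transvectant {f : MvPolynomial (Fin 4) ℂ} {n : ℕ}
    (hf : f.IsHomogeneous n) (j : ℕ) : (transvectant j f).IsHomogeneous (n - 2 * j) := by
  have hsub := (isHomogeneous_asaiNabla_pow hf j).aeval (S := ℂ) (n := 1)
    ![X (0 : Fin 2), X 1, X 0, X 1] (by intro i; fin_cases i <;> exact isHomogeneous_X _ _)
  rwa [one_mul] at hsub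

theorem transvectant_mem_equivariantHom {m n N j : ℕ} (hN : N + 2 * j = m + n) :
    transvectant j ∈ equivariantHom m n N := by
  intro f hf
  have hhom := isHomogeneous_transvectant (isHomogeneous_of_mem_bihomogeneousSubmodule hf) j
  rw [← hN, Nat.add_sub_cancel] at hhom
  exact ⟨hhom, fun M hM => by rw [transvectant_asaiAct4, hM, one_pow, one_smul]⟩

theorem asaiNabla_bimonomial (b c d : ℕ) :
    asaiNabla (bimonomial 0 b c d) = (-(b * c : ℂ)) • bimonomial 0 (b - 1) (c - 1) d := by
  have hXY' : pderiv 0 (pderiv 3 (bimonomial 0 b c d)) = 0 := by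
    simp [bimonomial, Derivation.leibniz, Derivation.leibniz_pow, pderiv_X]
  have hYX' : pderiv 1 (pderiv 2 (bimonomial 0 b c d)) =
      C (b * c : ℂ) * bimonomial 0 (b - 1) (c - 1) d := by
    simp only [bimonomial, pow_zero, one_mul, Derivation.leibniz, Derivation.leibniz_pow, pderiv_X,
      ne_eq, Fin.reduceEq, not_false_eq_true, Pi.single_eq_of_ne, Pi.single_eq_same, smul_eq_mul,
      nsmul_eq_mul, mul_zero, mul_one, add_zero, zero_add, Derivation.map_natCast,
      C_mul, map_natCast]
    ring
  rw [asaiNabla_apply, hXY', hYX', zero_sub, neg_smul, smul_eq_C_mul]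

theorem asaiNabla_pow_bimonomial (b c d i : ℕ) :
    (asaiNabla ^ i) (bimonomial 0 b c d) =
      ((-1 : ℂ) ^ i * b.descFactorial i * c.descFactorial i) •
        bimonomial 0 (b - i) (c - i) d := by
  induction i with
  | zero => simp
  | succ i ih =>
    rw [pow_succ', Module.End.mul_apply, ih, map_smul, asaiNabla_bimonomial, smul_smul,
      Nat.sub_sub, Nat.sub_sub, Nat.descFactorial_succ, Nat.descFactorial_succ]
    congr 1
    push_cast
    ring

theorem coeff_transvectant_bimonomial (m j d : ℕ) :
    coeff (Finsupp.single 1 (m - j + d)) (transvectant j (bimonomial 0 m j d)) =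
      (-1) ^ j * m.descFactorial j * j.factorial := by
  have hsub : asaiSubXY (bimonomial 0 (m - j) (j - j) d) = X 1 ^ (m - j + d) := by
    simp [asaiSubXY, bimonomial, pow_add]
  rw [transvectant, LinearMap.comp_apply, asaiNabla_pow_bimonomial, map_smul,
    AlgHom.toLinearMap_apply, hsub, coeff_smul, coeff_X_pow, if_pos rfl, Nat.descFactorial_self,
    smul_eq_mul, mul_one]

end Transvectant

theorem asai_stmt_8_general {m n N j : ℕ} (hjm : j ≤ m) (hjn : j ≤ n) (hN : N + 2 * j = m + n)
    {CGstar : MvPolynomial (Fin 4) ℂ →ₗ[ℂ] MvPolynomial (Fin 2) ℂ}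
    (hCG : CGstar ∈ equivariantHom m n N)
    (hnorm : coeff (Finsupp.single 1 N) (CGstar (bimonomial 0 m j (n - j))) =
      (m.factorial : ℂ) / ((m - j).factorial : ℂ))
    {δ : MvPolynomial (Fin 4) ℂ} (hδ : δ ∈ bihomogeneousSubmodule m n) :
    CGstar δ = (((-1 : ℂ) ^ j * (j.factorial : ℂ)) / ((j.factorial : ℂ) ^ 2)) •
      transvectant j δ := by
  set c : ℂ := ((-1 : ℂ) ^ j * (j.factorial : ℂ)) / ((j.factorial : ℂ) ^ 2) with hc
  have hdiff : CGstar - c • transvectant j ∈ equivariantHom m n N :=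
    sub_mem hCG (Submodule.smul_mem _ c (transvectant_mem_equivariantHom hN))
  refine sub_eq_zero.1 (apply_eq_zero_of_mem_equivariantHom hdiff hN hjn ?_ hδ)
  have hscalar : c * ((-1) ^ j * m.descFactorial j * j.factorial) = m.descFactorial j := by
    have hj : (j.factorial : ℂ) ≠ 0 := Nat.cast_ne_zero.2 j.factorial_ne_zero
    have hsign : (-1 : ℂ) ^ j * (-1) ^ j = 1 := by rw [← mul_pow]; simp
    rw [hc]
    field_simp
    linear_combination (m.descFactorial j : ℂ) * hsign
  have hdesc : (m.factorial : ℂ) / (m - j).factorial = m.descFactorial j := by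
    rw [div_eq_iff (Nat.cast_ne_zero.2 (Nat.factorial_ne_zero _)), mul_comm]
    exact_mod_cast (Nat.factorial_mul_descFactorial hjm).symm
  obtain rfl : N = m - j + (n - j) := by omega
  rw [LinearMap.sub_apply, LinearMap.smul_apply, coeff_sub, coeff_smul, smul_eq_mul, hnorm, hdesc,
    coeff_transvectant_bimonomial, hscalar, sub_self]

/-- Any `SL₂`-equivariant map `CG⋆ : V_k ⊗ V_k → V_{2k−2j}` (realised on
bihomogeneous polynomials of bidegree `(k,k)` in `(X,Y)` and `(X̄,Ȳ)`, landing in degree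
`2k−2j`) normalised as the transpose of the Clebsch–Gordan inclusion — i.e. with
`⟨CG⋆(Y^k X̄^j Ȳ^{k−j}), w^{[0,2k−2j]}⟩ = k!/(k−j)!` — is given by
`CG⋆(δ) = (−1)^j j! · (1/(j!)²) ∇^j(δ)|_{X̄=X, Ȳ=Y}`.  In particular the two natural
equivariant projections differ by the scalar `(−1)^j j!`. -/
theorem asai_stmt_8 (k j : ℕ) (hj : j ≤ k)
    (CGstar : MvPolynomial (Fin 4) ℂ →ₗ[ℂ] MvPolynomial (Fin 2) ℂ)
    (hdeg : ∀ δ : MvPolynomial (Fin 4) ℂ,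
      (∀ d ∈ δ.support, d 0 + d 1 = k ∧ d 2 + d 3 = k) →
      ∀ d ∈ (CGstar δ).support, d 0 + d 1 = 2 * k - 2 * j)
    (hequiv : ∀ M : Matrix (Fin 2) (Fin 2) ℂ, M.det = 1 →
      ∀ δ : MvPolynomial (Fin 4) ℂ,
        (∀ d ∈ δ.support, d 0 + d 1 = k ∧ d 2 + d 3 = k) →
        CGstar (asaiAct4 M δ) = asaiAct2 M (CGstar δ))
    (hnorm : coeff (Finsupp.single 1 (2 * k - 2 * j))
        (CGstar (X 1 ^ k * X 2 ^ j * X 3 ^ (k - j)))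
      = (k.factorial : ℂ) / ((k - j).factorial : ℂ))
    (δ : MvPolynomial (Fin 4) ℂ)
    (hδ : ∀ d ∈ δ.support, d 0 + d 1 = k ∧ d 2 + d 3 = k) :
    CGstar δ = (((-1 : ℂ) ^ j * (j.factorial : ℂ)) / ((j.factorial : ℂ) ^ 2)) •
      asaiSubXY ((asaiNabla ^ j) δ) := by
  exact asai_stmt_8_general hj hj (by omega) (mem_equivariantHom.2 ⟨hdeg, hequiv⟩)
    (by simpa [bimonomial] using hnorm) (mem_bihomogeneousSubmodule.2 hδ)
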